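/- Let X be a bounded geometry metric space and G(X) the associated coarse groupoid. Then there is a canonical isomorphism H_*(G(X)) ≅ H_*^{uf}(X) between the groupoid homology of G(X) and the uniformly finite homology of X. -/

import Mathlib

noncomputable section

open Function Set

attribute [local instance] Classical.propDecidable

universe u v w

/-- `ℤ[Y]`: the set of compactly supported continuous `ℤ`-valued functions on a space `Y`
(`ℤ` carries the discrete topology). -/
def ccZ (Y : Type v) [TopologicalSpace Y] : Set (Y → ℤ) :=
  {f | Continuous f ∧ HasCompactSupport f}

/-- `ℤ[Y]` as an additive subgroup of the group of all functions `Y → ℤ`. -/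
def ccZSub (Y : Type v) [TopologicalSpace Y] : AddSubgroup (Y → ℤ) where
  carrier := ccZ Y
  add_mem' {a b} ha hb := ⟨ha.1.add hb.1, ha.2.add hb.2⟩
  zero_mem' := ⟨continuous_const, by
    have h : tsupport (0 : Y → ℤ) = ∅ := by simp [tsupport]
    unfold HasCompactSupport
    rw [h]; exact isCompact_empty⟩
  neg_mem' {a} ha := ⟨ha.1.neg, HasCompactSupport.neg ha.2⟩

@[simp] lemma mem_ccZSub {Y : Type v} [TopologicalSpace Y] (f : Y → ℤ) :
    f ∈ ccZSub Y ↔ f ∈ ccZ Y := Iff.rfl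

/-- The pushforward `φ_*(a)(y) = ∑_{x ∈ φ⁻¹(y)} a x` of a function along a map. -/
def pushf {X : Type v} {Y : Type w} (φ : X → Y) (a : X → ℤ) : Y → ℤ :=
  fun y => ∑ᶠ x ∈ φ ⁻¹' {y}, a x

/-- The generated equivalence relation. -/
inductive RelGen {α : Sort*} (r : α → α → Prop) : α → α → Prop
  | rel {x y} : r x y → RelGen r x y
  | refl (x) : RelGen r x x
  | symm {x y} : RelGen r x y → RelGen r y x
  | trans {x y z} : RelGen r x y → RelGen r y z → RelGen r x z

/-- The purely algebraic data of a topological groupoid, with arrow space `G`: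
the set of units, source and range maps (valued in units), a (junk-total)
partially defined composition, and inversion. -/
structure GroupoidData (G : Type u) where
  unitSpace : Set G
  source : G → G
  range : G → G
  mul : G → G → G
  inv : G → G

namespace GroupoidData

variable {G : Type u} (D : GroupoidData G)

/-- The product of two subsets of a groupoid. -/
def setMul (A B : Set G) : Set G :=
  {w | ∃ a ∈ A, ∃ b ∈ B, D.source a = D.range b ∧ w = D.mul a b}

/-- A bisection: a subset on which both the source and the range map are injective. -/
def IsBisection (B : Set G) : Prop := Set.InjOn D.source B ∧ Set.InjOn D.range B

/-- Membership in the subgroupoid generated by a subset `A` of `G`. -/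
inductive InSubgroupoid (A : Set G) : G → Prop
  | base {g} : g ∈ A → InSubgroupoid A g
  | inv {g} : InSubgroupoid A g → InSubgroupoid A (D.inv g)
  | mul {g h} : InSubgroupoid A g → InSubgroupoid A h → D.source g = D.range h →
      InSubgroupoid A (D.mul g h)

/-- `G` is a (locally compact, Hausdorff, étale) ample groupoid: all the algebraic groupoid
axioms hold, the structure maps are suitably continuous, the source and range maps are local
homeomorphisms onto the open unit space (étaleness), and the compact open bisections form a
basis for the topology (ampleness). -/
structure IsAmpleGroupoid [TopologicalSpace G] : Prop where
  t2 : T2Space G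
  locallyCompact : LocallyCompactSpace G
  source_mem : ∀ g, D.source g ∈ D.unitSpace
  range_mem : ∀ g, D.range g ∈ D.unitSpace
  source_unit : ∀ x ∈ D.unitSpace, D.source x = x
  range_unit : ∀ x ∈ D.unitSpace, D.range x = x
  source_mul : ∀ g h, D.source g = D.range h → D.source (D.mul g h) = D.source h
  range_mul : ∀ g h, D.source g = D.range h → D.range (D.mul g h) = D.range g
  mul_assoc : ∀ g h k, D.source g = D.range h → D.source h = D.range k →
      D.mul (D.mul g h) k = D.mul g (D.mul h k)
  source_inv : ∀ g, D.source (D.inv g) = D.range g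
  range_inv : ∀ g, D.range (D.inv g) = D.source g
  inv_mul : ∀ g, D.mul (D.inv g) g = D.source g
  mul_inv : ∀ g, D.mul g (D.inv g) = D.range g
  unit_mul : ∀ g, D.mul (D.range g) g = g
  mul_unit : ∀ g, D.mul g (D.source g) = g
  continuous_inv : Continuous D.inv
  continuous_mul : Continuous fun p : {p : G × G // D.source p.1 = D.range p.2} =>
      D.mul p.1.1 p.1.2
  open_unitSpace : IsOpen D.unitSpace
  etale_source : IsLocalHomeomorph D.source
  etale_range : IsLocalHomeomorph D.range
  ample : ∀ g : G, ∀ U : Set G, IsOpen U → g ∈ U →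
      ∃ B : Set G, g ∈ B ∧ B ⊆ U ∧ IsOpen B ∧ IsCompact B ∧ D.IsBisection B

/-- A groupoid is principal if every arrow with equal range and source is a unit. -/
def IsPrincipal : Prop := ∀ g, D.source g = D.range g → g ∈ D.unitSpace

/-- `G` has dynamic asymptotic dimension at most `d`: for every relatively compact open
subset `K` of `G` there are `d+1` open subsets of the unit space covering `r(K) ∪ s(K)` such
that the subgroupoid generated by the elements of `K` with source and range in one of these
sets is relatively compact. -/
def DadLE [TopologicalSpace G] (d : ℕ) : Prop :=
  ∀ K : Set G, IsOpen K → IsCompact (closure K) →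
    ∃ U : Fin (d + 1) → Set G,
      (∀ i, IsOpen (U i) ∧ U i ⊆ D.unitSpace) ∧
      (D.range '' K ∪ D.source '' K ⊆ ⋃ i, U i) ∧
      ∀ i, IsCompact (closure
        {g | D.InSubgroupoid {g ∈ K | D.source g ∈ U i ∧ D.range g ∈ U i} g})

/-! ### Matui's complex computing the Crainic–Moerdijk groupoid homology `H_*(G)` -/

/-- The space `G^(n)` of composable `n`-tuples. -/
def Comps (n : ℕ) : Set (Fin n → G) :=
  {v | ∀ (j : Fin n) (h : (j : ℕ) + 1 < n), D.source (v j) = D.range (v ⟨(j : ℕ) + 1, h⟩)}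

/-- The face maps of Matui's complex on tuples:
`d_0` drops the first entry, `d_{n+1}` drops the last one, and the intermediate
`d_i` compose two consecutive entries. -/
def dface (n : ℕ) (i : Fin (n + 2)) (v : Fin (n + 1) → G) : Fin n → G := fun j =>
  if (j : ℕ) + 1 < (i : ℕ) then v j.castSucc
  else if (j : ℕ) + 1 = (i : ℕ) then D.mul (v j.castSucc) (v j.succ)
  else v j.succ

/-- The spaces of Matui's complex: `G^0` in degree `0`, and `G^(n)` in degree `n ≥ 1`. -/
def MSp : ℕ → Type u
  | 0 => ↥(D.unitSpace)
  | (n + 1) => ↥(D.Comps (n + 1))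

instance [TopologicalSpace G] (n : ℕ) : TopologicalSpace (D.MSp n) := by
  cases n with
  | zero => exact (inferInstance : TopologicalSpace ↥(D.unitSpace))
  | succ n => exact (inferInstance : TopologicalSpace ↥(D.Comps (n + 1)))

/-- The boundary maps of Matui's complex, given by alternating sums of pushforwards
along the face maps (in degree one, `∂₁ = s_* - r_*`). -/
def mBdry : (n : ℕ) → ((D.MSp (n + 1)) → ℤ) → (D.MSp n) → ℤ
  | 0, a => fun u =>
      (∑ᶠ x ∈ {x : ↥(D.Comps 1) | D.source (x.1 0) = u.1}, a x)
        - ∑ᶠ x ∈ {x : ↥(D.Comps 1) | D.range (x.1 0) = u.1}, a x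
  | (n + 1), a => fun y =>
      ∑ i : Fin (n + 3), (-1 : ℤ) ^ (i : ℕ) *
        ∑ᶠ x ∈ {x : ↥(D.Comps (n + 2)) | D.dface (n + 1) i x.1 = y.1}, a x

variable [TopologicalSpace G]

/-- The cycle subgroup of Matui's complex in degree `n`. -/
def mCycles : (n : ℕ) → AddSubgroup ((D.MSp n) → ℤ)
  | 0 => ccZSub (D.MSp 0)
  | (n + 1) => AddSubgroup.closure {a | a ∈ ccZ (D.MSp (n + 1)) ∧ D.mBdry n a = 0}

/-- The boundary subgroup of Matui's complex in degree `n`. -/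
def mBdries (n : ℕ) : AddSubgroup ((D.MSp n) → ℤ) :=
  AddSubgroup.closure {c | ∃ a ∈ ccZ (D.MSp (n + 1)), D.mBdry n a = c}

/-- The groupoid homology `H_n(G)` (Crainic–Moerdijk homology, computed by Matui's complex). -/
def Homology (n : ℕ) : Type u :=
  (D.mCycles n) ⧸ AddSubgroup.comap (D.mCycles n).subtype (D.mBdries n)

instance (n : ℕ) : AddCommGroup (D.Homology n) :=
  QuotientAddGroup.Quotient.addCommGroup _

/-- The homology class of a cycle. -/
def hcls {n : ℕ} (a : (D.MSp n) → ℤ) (ha : a ∈ D.mCycles n) : D.Homology n :=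
  QuotientAddGroup.mk ⟨a, ha⟩

end GroupoidData
/-! ### Bounded geometry, uniformly finite homology, and the coarse groupoid -/

section Coarse

variable (X : Type u) [MetricSpace X]

/-- A metric space has bounded geometry if the cardinalities of `r`-balls are uniformly
bounded, for every `r`. -/
def BoundedGeometry : Prop :=
  ∀ r : ℝ, ∃ N : ℕ, ∀ x : X, ∃ s : Finset X, Metric.closedBall x r ⊆ ↑s ∧ s.card ≤ N

/-- The Block–Weinberger uniformly finite `n`-chains of `X`: bounded integer-valued
functions on `X^{n+1}` supported on tuples of uniformly bounded diameter. -/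
def ufChains (n : ℕ) : AddSubgroup ((Fin (n + 1) → X) → ℤ) where
  carrier := {c | (∃ M : ℤ, ∀ v, |c v| ≤ M) ∧
      ∃ r : ℝ, ∀ v, c v ≠ 0 → ∀ i j, dist (v i) (v j) ≤ r}
  add_mem' {a b} ha hb := by
    obtain ⟨⟨M, hM⟩, r, hr⟩ := ha
    obtain ⟨⟨M', hM'⟩, r', hr'⟩ := hb
    refine ⟨⟨M + M', fun v => le_trans (abs_add_le _ _) (add_le_add (hM v) (hM' v))⟩,
      max r r', fun v hv i j => ?_⟩
    by_cases h : a v = 0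
    · exact le_trans (hr' v (by simpa [Pi.add_apply, h] using hv) i j) (le_max_right _ _)
    · exact le_trans (hr v h i j) (le_max_left _ _)
  zero_mem' := ⟨⟨0, fun v => by simp⟩, 0, fun v hv => absurd rfl hv⟩
  neg_mem' {a} ha := by
    obtain ⟨⟨M, hM⟩, r, hr⟩ := ha
    exact ⟨⟨M, fun v => by simpa using hM v⟩, r, fun v hv => hr v (by simpa using hv)⟩

/-- The boundary map of uniformly finite homology: the alternating sum of the pushforwards
along the coordinate-deleting maps. -/
def ufBdry (n : ℕ) (c : (Fin (n + 2) → X) → ℤ) : (Fin (n + 1) → X) → ℤ :=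
  fun y => ∑ i : Fin (n + 2), (-1 : ℤ) ^ (i : ℕ) *
    pushf (fun v : Fin (n + 2) → X => fun j => v (i.succAbove j)) c y

/-- The cycles of the uniformly finite chain complex. -/
def ufCycles : (n : ℕ) → AddSubgroup ((Fin (n + 1) → X) → ℤ)
  | 0 => ufChains X 0
  | (n + 1) => AddSubgroup.closure {c | c ∈ ufChains X (n + 1) ∧ ufBdry X n c = 0}

/-- The boundaries of the uniformly finite chain complex. -/
def ufBdries (n : ℕ) : AddSubgroup ((Fin (n + 1) → X) → ℤ) :=
  AddSubgroup.closure {c | ∃ b ∈ ufChains X (n + 1), ufBdry X n b = c}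

/-- The uniformly finite homology `H_*^{uf}(X)` of Block and Weinberger. -/
def ufHomology (n : ℕ) : Type u :=
  (ufCycles X n) ⧸ AddSubgroup.comap (ufCycles X n).subtype (ufBdries X n)

instance (n : ℕ) : AddCommGroup (ufHomology X n) :=
  QuotientAddGroup.Quotient.addCommGroup _

end Coarse
section CoarseGroupoid

variable (X : Type u) [MetricSpace X]

/-- The entourage `E_r`: the closure in `βX × βX` of the set of pairs of points of `X` at
distance at most `r`. -/
def Ent (r : ℝ) : Set (StoneCech X × StoneCech X) :=
  closure {p | ∃ x y : X, dist x y ≤ r ∧ p = (stoneCechUnit x, stoneCechUnit y)}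

/-- The underlying set of the coarse groupoid `G(X) = ⋃_{r > 0} E_r ⊆ βX × βX`. -/
def CoarseGpd : Type u :=
  {p : StoneCech X × StoneCech X // ∃ r : ℝ, 0 < r ∧ p ∈ Ent X r}

/-- The weak topology on the coarse groupoid determined by the union `⋃ E_r`. -/
def coarseTop : TopologicalSpace (CoarseGpd X) :=
  ⨆ r : {r : ℝ // 0 < r},
    TopologicalSpace.coinduced
      (fun q : ↥(Ent X r.1) => (⟨q.1, r.1, r.2, q.2⟩ : CoarseGpd X)) inferInstance

lemma diag_mem_Ent (b : StoneCech X) : (b, b) ∈ Ent X 1 := by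
  have h1 : b ∈ closure (Set.range (stoneCechUnit : X → StoneCech X)) := by
    rw [denseRange_stoneCechUnit.closure_range]; trivial
  have hc : Continuous (fun c : StoneCech X => ((c, c) : StoneCech X × StoneCech X)) :=
    continuous_id.prodMk continuous_id
  have h2 : (b, b) ∈ closure ((fun c : StoneCech X => ((c, c) : StoneCech X × StoneCech X))
      '' Set.range (stoneCechUnit : X → StoneCech X)) :=
    (image_closure_subset_closure_image hc) ⟨b, h1, rfl⟩
  refine closure_mono ?_ h2
  rintro p ⟨c, ⟨x, rfl⟩, rfl⟩
  exact ⟨x, x, by simp, rfl⟩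

/-- The pair-groupoid structure on the coarse groupoid `G(X)`. -/
def coarseData : GroupoidData (CoarseGpd X) where
  unitSpace := {p | p.1.1 = p.1.2}
  source p := ⟨(p.1.2, p.1.2), 1, one_pos, diag_mem_Ent X p.1.2⟩
  range p := ⟨(p.1.1, p.1.1), 1, one_pos, diag_mem_Ent X p.1.1⟩
  mul p q :=
    if h : ∃ r : ℝ, 0 < r ∧ (p.1.1, q.1.2) ∈ Ent X r then ⟨(p.1.1, q.1.2), h⟩ else p
  inv p := if h : ∃ r : ℝ, 0 < r ∧ (p.1.2, p.1.1) ∈ Ent X r then ⟨(p.1.2, p.1.1), h⟩ else p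

end CoarseGroupoid

/-!
The points of `G(X)^(n)` are the ultrafilters on `X^{n+1}` that contain a set of tuples of bounded
diameter. Bounded geometry lets one colour `X` with finitely many colours so that nearby points
get different colours; on a class of tuples with prescribed colours each coordinate determines all
the others. Hence such an ultrafilter is determined by its vertices in `βX`, any composable string
of arrows comes from one, and the pushforwards along the face maps, being finite sums of
pushforwards along injective maps, commute with limits along ultrafilters. A uniformly finite chain
has finite range, so it extends by ultralimits to a continuous function on `G(X)^(n)`, compactly
supported because the ultrafilters containing the tuples of diameter at most `r` form a compact
open set. Restriction to principal ultrafilters is therefore an isomorphism of chain complexes from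
`ℤ[G(X)^(n)]` onto `C_n(X)`.
-/

section Pushforward

variable {A B : Type*} {φ : A → B}

lemma pushf_eq_zero_of_notMem_image {c : A → ℤ} {b : B} (hb : b ∉ φ '' support c) :
    pushf φ c b = 0 :=
  finsum_mem_eq_zero_of_forall_eq_zero fun a ha => by_contra fun hca => hb ⟨a, hca, ha⟩

lemma support_pushf_subset (φ : A → B) (c : A → ℤ) : support (pushf φ c) ⊆ φ '' support c :=
  fun _ hb => by_contra fun hb' => hb (pushf_eq_zero_of_notMem_image hb')

lemma preimage_inter_support_subsingleton {c : A → ℤ} (hφ : InjOn φ (support c)) (b : B) :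
    (φ ⁻¹' {b} ∩ support c).Subsingleton :=
  fun _ h _ h' => hφ h.2 h'.2 (h.1.trans h'.1.symm)

lemma pushf_apply_of_injOn_support {c : A → ℤ} (hφ : InjOn φ (support c)) {a : A}
    (ha : a ∈ support c) : pushf φ c (φ a) = c a := by
  have hfibre : φ ⁻¹' {φ a} ∩ support c = {a} :=
    (preimage_inter_support_subsingleton hφ _).eq_singleton_of_mem ⟨rfl, ha⟩
  rw [pushf, ← finsum_mem_inter_support, hfibre, finsum_mem_singleton]

lemma pushf_sum {K : Type*} (s : Finset K) {c : K → A → ℤ}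
    (hc : ∀ k ∈ s, InjOn φ (support (c k))) :
    pushf φ (∑ k ∈ s, c k) = ∑ k ∈ s, pushf φ (c k) := by
  funext b
  simp only [pushf, finsum_mem_def, Finset.sum_apply]
  rw [← finsum_sum_comm s (fun a k => (φ ⁻¹' {b}).indicator (c k) a)]
  · exact finsum_congr fun a => by simp only [indicator_apply]; split_ifs <;> simp
  · intro k hk
    simpa only [HasFiniteSupport, support_indicator] using
      (preimage_inter_support_subsingleton (hc k hk) b).finite

lemma pushf_apply_of_injective {A' B' : Type*} {ψ : A' → B'} {e : A → A'} {f : B → B'}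
    (he : Injective e) (hf : Injective f) (hcomm : ∀ a, ψ (e a) = f (φ a)) {c : A' → ℤ}
    (hc : support c ⊆ Set.range e) (b : B) : pushf ψ c (f b) = pushf φ (c ∘ e) b := by
  have hfibre : ∀ x ∈ support c, x ∈ ψ ⁻¹' {f b} ↔ x ∈ e '' (φ ⁻¹' {b}) := by
    intro x hx
    obtain ⟨a, rfl⟩ := hc hx
    rw [he.mem_set_image, mem_preimage, mem_preimage, mem_singleton_iff, mem_singleton_iff,
      hcomm, hf.eq_iff]
  rw [pushf, finsum_mem_inter_support_eq' _ _ _ hfibre, finsum_mem_image he.injOn]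
  rfl

lemma finite_range_pushf_of_injOn {c : A → ℤ} (hc : (Set.range c).Finite)
    (hφ : InjOn φ (support c)) : (Set.range (pushf φ c)).Finite := by
  refine (hc.insert 0).subset ?_
  rintro _ ⟨b, rfl⟩
  by_cases hb : b ∈ φ '' support c
  · obtain ⟨a, ha, rfl⟩ := hb
    exact Or.inr ⟨a, (pushf_apply_of_injOn_support hφ ha).symm⟩
  · exact Or.inl (pushf_eq_zero_of_notMem_image hb)

end Pushforward

section FiniteRange

variable {A K : Type*}

lemma finite_range_iff_exists_abs_le {c : A → ℤ} :
    (Set.range c).Finite ↔ ∃ M, ∀ a, |c a| ≤ M := by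
  constructor
  · intro hc
    obtain ⟨M, hM⟩ := (hc.image (|·|)).bddAbove
    exact ⟨M, fun a => hM ⟨c a, mem_range_self a, rfl⟩⟩
  · rintro ⟨M, hM⟩
    exact (finite_Icc (-M) M).subset (range_subset_iff.2 fun a => abs_le.1 (hM a))

lemma finite_range_sum (s : Finset K) {c : K → A → ℤ} (hc : ∀ k ∈ s, (Set.range (c k)).Finite) :
    (Set.range (∑ k ∈ s, c k)).Finite := by
  refine Finset.sum_induction c (fun f => (Set.range f).Finite) (fun f g hf hg => ?_) ?_ hc
  · exact (hf.add hg).subset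
      (range_subset_iff.2 fun a => add_mem_add (mem_range_self a) (mem_range_self a))
  · exact (finite_singleton 0).subset (range_subset_iff.2 fun _ => rfl)

lemma finite_range_indicator {c : A → ℤ} (hc : (Set.range c).Finite) (s : Set A) :
    (Set.range (s.indicator c)).Finite := by
  refine (hc.insert 0).subset (range_subset_iff.2 fun a => ?_)
  rcases indicator_eq_zero_or_self s c a with h | h
  · exact Or.inl h
  · exact Or.inr ⟨a, h.symm⟩

lemma sum_indicator_preimage_singleton [Fintype K] (κ : A → K) (c : A → ℤ) :
    ∑ k, (κ ⁻¹' {k}).indicator c = c := by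
  funext a
  simp [indicator_apply]

end FiniteRange

section UltrafilterLimit

variable {A B : Type*} {c : A → ℤ} {u : Ultrafilter A}

/-- The limit of an integer-valued function along an ultrafilter; for `c` of finite range,
`ultraLim c` is the continuous extension of `c` to the Stone–Čech compactification of the
discrete set `A`. It is a junk value if `c` is not eventually constant along `u`. -/
def ultraLim (c : A → ℤ) (u : Ultrafilter A) : ℤ := Filter.limUnder (u : Filter A) c

lemma ultraLim_eq {k : ℤ} (h : ∀ᶠ a in u, c a = k) : ultraLim c u = k :=
  (tendsto_nhds_of_eventually_eq h).limUnder_eq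

lemma ultraLim_pure (c : A → ℤ) (a : A) : ultraLim c (pure a) = c a :=
  ultraLim_eq (Filter.eventually_pure.2 rfl)

lemma eventually_eq_ultraLim (hc : (Set.range c).Finite) (u : Ultrafilter A) :
    ∀ᶠ a in u, c a = ultraLim c u := by
  obtain ⟨k, -, hk⟩ := (Ultrafilter.eventually_exists_mem_iff (P := fun k a => c a = k) hc).1
    (.of_forall fun a => ⟨c a, mem_range_self a, rfl⟩)
  rwa [ultraLim_eq hk]

lemma ultraLim_ne_zero_iff (hc : (Set.range c).Finite) :
    ultraLim c u ≠ 0 ↔ support c ∈ u := by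
  constructor
  · intro hu
    filter_upwards [eventually_eq_ultraLim hc u] with a ha
    rwa [mem_support, ha]
  · intro hu
    obtain ⟨a, ha, ha'⟩ := ((eventually_eq_ultraLim hc u).and hu).exists
    rwa [← ha]

lemma ultraLim_sum {K : Type*} (s : Finset K) {c : K → A → ℤ}
    (hc : ∀ k ∈ s, (Set.range (c k)).Finite) :
    ultraLim (∑ k ∈ s, c k) = ∑ k ∈ s, ultraLim (c k) := by
  funext u
  have hlim : ∀ᶠ a in u, ∀ k ∈ s, c k a = ultraLim (c k) u :=
    (Filter.eventually_all_finset s).2 fun k hk => eventually_eq_ultraLim (hc k hk) u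
  refine ultraLim_eq ?_
  filter_upwards [hlim] with a ha
  simpa only [Finset.sum_apply] using Finset.sum_congr rfl ha

lemma finite_range_zsmul (hc : (Set.range c).Finite) (m : ℤ) : (Set.range (m • c)).Finite :=
  (hc.image (m • ·)).subset (range_subset_iff.2 fun a => ⟨c a, mem_range_self a, rfl⟩)

lemma ultraLim_zsmul (hc : (Set.range c).Finite) (m : ℤ) :
    ultraLim (m • c) = m • ultraLim c := by
  funext u
  refine ultraLim_eq ?_
  filter_upwards [eventually_eq_ultraLim hc u] with a ha
  rw [Pi.smul_apply, Pi.smul_apply, ha]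

lemma injOn_map_of_injOn {φ : A → B} {s : Set A} (hφ : InjOn φ s) :
    InjOn (Ultrafilter.map φ) {u | s ∈ u} := fun _ hu _ hv huv =>
  Ultrafilter.coe_injective <| (Filter.map_eq_map_iff_of_injOn hu hv hφ).1 <|
    congrArg Ultrafilter.toFilter huv

lemma continuous_ultrafilter_map (f : A → B) : Continuous (Ultrafilter.map f) := by
  refine continuous_generateFrom_iff.2 ?_
  rintro _ ⟨s, rfl⟩
  exact ultrafilter_isOpen_basic (f ⁻¹' s)

lemma pushf_map_ultraLim_of_injOn {φ : A → B} (hc : (Set.range c).Finite)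
    (hφ : InjOn φ (support c)) :
    pushf (Ultrafilter.map φ) (ultraLim c) = ultraLim (pushf φ c) := by
  funext w
  have hsupp : support (ultraLim c) ⊆ {u | support c ∈ u} := fun u =>
    (ultraLim_ne_zero_iff hc).1
  by_cases hw : w ∈ Ultrafilter.map φ '' support (ultraLim c)
  · obtain ⟨u, hu, rfl⟩ := hw
    rw [pushf_apply_of_injOn_support ((injOn_map_of_injOn hφ).mono hsupp) hu]
    have hlim : ∀ᶠ a in u, pushf φ c (φ a) = ultraLim c u := by
      filter_upwards [eventually_eq_ultraLim hc u, hsupp hu] with a ha hac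
      rw [pushf_apply_of_injOn_support hφ hac, ha]
    exact (ultraLim_eq (u := u.map φ) hlim).symm
  · rw [pushf_eq_zero_of_notMem_image hw]
    by_contra hlim
    have himage : φ '' support c ∈ w := Filter.mem_of_superset
      ((ultraLim_ne_zero_iff (finite_range_pushf_of_injOn hc hφ)).1 (Ne.symm hlim))
      (support_pushf_subset φ c)
    exact hw ⟨Ultrafilter.ofComapInfPrincipal himage,
      (ultraLim_ne_zero_iff hc).2 (Ultrafilter.ofComapInfPrincipal_mem himage),
      Ultrafilter.ofComapInfPrincipal_eq_of_map himage⟩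

section Coloring

variable {K : Type*} {φ : A → B} {κ : A → K}

lemma injOn_support_indicator_of_injOn_prodMk (hφ : InjOn (fun a => (φ a, κ a)) (support c))
    (k : K) : InjOn φ (support ((κ ⁻¹' {k}).indicator c)) := by
  rw [support_indicator]
  exact fun a ha b hb hab => hφ ha.2 hb.2 (Prod.ext hab (ha.1.trans hb.1.symm))

variable [Finite K]

lemma finite_range_pushf (hc : (Set.range c).Finite)
    (hφ : InjOn (fun a => (φ a, κ a)) (support c)) : (Set.range (pushf φ c)).Finite := by
  have := Fintype.ofFinite K
  have hinj := injOn_support_indicator_of_injOn_prodMk hφ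
  rw [← sum_indicator_preimage_singleton κ c, pushf_sum _ fun k _ => hinj k]
  exact finite_range_sum _ fun k _ =>
    finite_range_pushf_of_injOn (finite_range_indicator hc _) (hinj k)

lemma pushf_map_ultraLim (hc : (Set.range c).Finite)
    (hφ : InjOn (fun a => (φ a, κ a)) (support c)) :
    pushf (Ultrafilter.map φ) (ultraLim c) = ultraLim (pushf φ c) := by
  have := Fintype.ofFinite K
  let part (k : K) : A → ℤ := (κ ⁻¹' {k}).indicator c
  have hsum : ∑ k, part k = c := sum_indicator_preimage_singleton κ c
  have hpart (k : K) : (Set.range (part k)).Finite := finite_range_indicator hc _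
  have hinj (k : K) : InjOn φ (support (part k)) :=
    injOn_support_indicator_of_injOn_prodMk hφ k
  have hinj_map (k : K) : InjOn (Ultrafilter.map φ) (support (ultraLim (part k))) :=
    (injOn_map_of_injOn (hinj k)).mono fun _ => (ultraLim_ne_zero_iff (hpart k)).1
  calc pushf (Ultrafilter.map φ) (ultraLim c)
      = pushf (Ultrafilter.map φ) (∑ k, ultraLim (part k)) := by
        rw [← ultraLim_sum _ fun k _ => hpart k, hsum]
    _ = ∑ k, pushf (Ultrafilter.map φ) (ultraLim (part k)) := pushf_sum _ fun k _ => hinj_map k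
    _ = ∑ k, ultraLim (pushf φ (part k)) :=
        Finset.sum_congr rfl fun k _ => pushf_map_ultraLim_of_injOn (hpart k) (hinj k)
    _ = ultraLim (∑ k, pushf φ (part k)) :=
        (ultraLim_sum _ fun k _ => finite_range_pushf_of_injOn (hpart k) (hinj k)).symm
    _ = ultraLim (pushf φ c) := by rw [← pushf_sum _ fun k _ => hinj k, hsum]

end Coloring

end UltrafilterLimit

section Coloring

lemma colorable_of_neighborSet_subset_of_card_le {V : Type*} {G : SimpleGraph V} {N : ℕ}
    (hN : ∀ v, ∃ s : Finset V, G.neighborSet v ⊆ s ∧ s.card ≤ N) : G.Colorable (N + 1) := by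
  have wf : WellFounded (WellOrderingRel : V → V → Prop) := IsWellFounded.wf
  have hfresh (v : V) (f : ∀ w, WellOrderingRel w v → Fin (N + 1)) :
      ∃ k, ∀ w h, G.Adj v w → f w h ≠ k := by
    obtain ⟨s, hs, hcard⟩ := hN v
    let color (w : V) : Fin (N + 1) := if h : WellOrderingRel w v then f w h else 0
    have hlt : (s.image color).card < (Finset.univ : Finset (Fin (N + 1))).card := by
      rw [Finset.card_fin]
      exact Nat.lt_succ_of_le (Finset.card_image_le.trans hcard)
    obtain ⟨k, -, hk⟩ := Finset.exists_mem_notMem_of_card_lt_card hlt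
    refine ⟨k, fun w h hvw hwk => hk (Finset.mem_image.2 ⟨w, hs hvw, ?_⟩)⟩
    rw [← hwk]
    exact dif_pos h
  choose F hF using hfresh
  have hne {v w : V} (h : WellOrderingRel w v) (hvw : G.Adj v w) :
      wf.fix F w ≠ wf.fix F v := by
    rw [wf.fix_eq F v]
    exact hF v (fun y _ => wf.fix F y) w h hvw
  refine ⟨SimpleGraph.Coloring.mk (wf.fix F) fun {v w} hvw => ?_⟩
  rcases trichotomous_of (WellOrderingRel : V → V → Prop) v w with h | h | h
  · exact hne h hvw.symm
  · exact absurd h hvw.ne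
  · exact (hne h hvw).symm

/-- The tuples of points of `X` indexed by `ι` of diameter at most `r`. -/
def boundedTuples (ι : Type*) (X : Type*) [MetricSpace X] (r : ℝ) : Set (ι → X) :=
  {v | ∀ i j, dist (v i) (v j) ≤ r}

variable {X : Type*} [MetricSpace X] {ι κ : Type*}

lemma boundedTuples_mono {r s : ℝ} (h : r ≤ s) : boundedTuples ι X r ⊆ boundedTuples ι X s :=
  fun _ hv i j => (hv i j).trans h

lemma comp_mem_boundedTuples {r : ℝ} {v : ι → X} (hv : v ∈ boundedTuples ι X r) (f : κ → ι) :
    v ∘ f ∈ boundedTuples κ X r :=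
  fun i j => hv (f i) (f j)

namespace BoundedGeometry

variable (hbg : BoundedGeometry X)
include hbg

lemma discreteTopology : DiscreteTopology X := by
  refine discreteTopology_iff_isOpen_singleton.2 fun x => ?_
  obtain ⟨s, hs, -⟩ := (hbg 1).choose_spec x
  exact isOpen_singleton_of_finite_mem_nhds x (Metric.closedBall_mem_nhds x one_pos)
    (s.finite_toSet.subset hs)

lemma exists_coloring (R : ℝ) :
    ∃ N : ℕ, ∃ χ : X → Fin N, ∀ x y, dist x y ≤ R → χ x = χ y → x = y := by
  obtain ⟨N, hN⟩ := hbg R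
  let G : SimpleGraph X := SimpleGraph.fromRel fun x y => dist x y ≤ R
  have hadj {x y : X} : G.Adj x y ↔ x ≠ y ∧ dist x y ≤ R := by
    simp only [G, SimpleGraph.fromRel_adj, dist_comm y x, or_self]
  have hcolorable : G.Colorable (N + 1) := by
    refine colorable_of_neighborSet_subset_of_card_le fun x => ?_
    obtain ⟨s, hs, hcard⟩ := hN x
    exact ⟨s, fun y hy => hs (Metric.mem_closedBall'.2 (hadj.1 hy).2), hcard⟩
  obtain ⟨χ⟩ := hcolorable
  exact ⟨N + 1, χ, fun x y hxy hχ => by_contra fun hne => χ.valid (hadj.2 ⟨hne, hxy⟩) hχ⟩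

lemma exists_coloring_injOn (ι : Type*) (r : ℝ) :
    ∃ N : ℕ, ∃ χ : X → Fin N, ∀ i : ι,
      InjOn (fun v : ι → X => (v i, χ ∘ v)) (boundedTuples ι X r) := by
  obtain ⟨N, χ, hχ⟩ := hbg.exists_coloring (r + r)
  refine ⟨N, χ, fun i v hv w hw hvw => funext fun j => ?_⟩
  obtain ⟨hi : v i = w i, hcolor : χ ∘ v = χ ∘ w⟩ := Prod.ext_iff.1 hvw
  refine hχ _ _ ?_ (congrFun hcolor j)
  calc dist (v j) (w j) ≤ dist (v j) (v i) + dist (v i) (w j) := dist_triangle _ _ _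
    _ ≤ r + r := add_le_add (hv j i) (hi ▸ hw i j)

lemma exists_injOn_eval [Finite ι] (b : ι → Ultrafilter X) (r : ℝ) :
    ∃ S : Set (ι → X), (∀ i, InjOn (eval i) (boundedTuples ι X r ∩ S)) ∧
      ∀ u : Ultrafilter (ι → X), (∀ i, u.map (eval i) = b i) → S ∈ u := by
  obtain ⟨N, χ, hχ⟩ := hbg.exists_coloring_injOn ι r
  choose k hk using fun i => ((b i).map χ).eq_pure_of_finite
  refine ⟨{v | ∀ i, χ (v i) = k i}, fun i v hv w hw hvw => ?_, fun u hu => ?_⟩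
  · exact hχ i hv.1 hw.1 (Prod.ext hvw (funext fun j => (hv.2 j).trans (hw.2 j).symm))
  · refine Filter.eventually_all.2 fun i => ?_
    have hmem : {k i} ∈ (b i).map χ := by
      rw [hk i]
      exact mem_singleton (k i)
    rw [← hu i] at hmem
    exact hmem

end BoundedGeometry

end Coloring

/-- A coarse simplex of `X` with vertex set `ι`: an ultrafilter on `ι → X` containing a set of
tuples of bounded diameter. For `ι = Fin (n + 1)` these are the points of the nerve of the
coarse groupoid in degree `n`, the principal ultrafilters being the simplices of `X` itself. -/
abbrev CoarseSimplex (ι : Type*) (X : Type*) [MetricSpace X] : Type _ :=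
  {u : Ultrafilter (ι → X) // ∃ r, boundedTuples ι X r ∈ u}

namespace CoarseSimplex

variable {ι κ X : Type*} [MetricSpace X]

/-- The `i`-th vertex of a coarse simplex, a point of the compactification of `X`. -/
def vertex (i : ι) (u : CoarseSimplex ι X) : Ultrafilter X := u.1.map (eval i)

/-- Reindexing of vertices along `f`; faces are the case `f = i.succAbove`. -/
def restrict (f : κ → ι) (u : CoarseSimplex ι X) : CoarseSimplex κ X :=
  ⟨u.1.map (· ∘ f), by
    obtain ⟨r, hr⟩ := u.2
    exact ⟨r, Ultrafilter.mem_map.2 <|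
      Filter.mem_of_superset hr fun _ hv => comp_mem_boundedTuples hv f⟩⟩

/-- The coarse simplices of diameter at most `r`. -/
def ofDiam (ι : Type*) (X : Type*) [MetricSpace X] (r : ℝ) : Set (CoarseSimplex ι X) :=
  {u | boundedTuples ι X r ∈ u.1}

lemma ofDiam_mono {r s : ℝ} (h : r ≤ s) : ofDiam ι X r ⊆ ofDiam ι X s :=
  fun _ hu => Filter.mem_of_superset hu (boundedTuples_mono h)

lemma isOpen_mem (s : Set (ι → X)) : IsOpen {u : CoarseSimplex ι X | s ∈ u.1} :=
  (ultrafilter_isOpen_basic s).preimage continuous_subtype_val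

lemma isCompact_ofDiam (r : ℝ) : IsCompact (ofDiam ι X r) := by
  have himage : Subtype.val '' ofDiam ι X r = {u | boundedTuples ι X r ∈ u} :=
    Subset.antisymm (image_subset_iff.2 fun _ hu => hu) fun u hu => ⟨⟨u, r, hu⟩, hu, rfl⟩
  rw [Subtype.isCompact_iff, himage]
  exact (ultrafilter_isClosed_basic _).isCompact

lemma exists_subset_ofDiam {K : Set (CoarseSimplex ι X)} (hK : IsCompact K) :
    ∃ r, K ⊆ ofDiam ι X r :=
  hK.elim_directed_cover (ofDiam ι X) (fun _ => isOpen_mem _)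
    (fun u _ => mem_iUnion.2 u.2) (directed_of_isDirected_le fun _ _ => ofDiam_mono)

lemma continuous_restrict (f : κ → ι) :
    Continuous (restrict f : CoarseSimplex ι X → CoarseSimplex κ X) :=
  ((continuous_ultrafilter_map _).comp continuous_subtype_val).subtype_mk _

lemma eq_of_forall_vertex_eq (hbg : BoundedGeometry X) [Finite ι] [Nonempty ι]
    {u u' : CoarseSimplex ι X} (h : ∀ i, u.vertex i = u'.vertex i) : u = u' := by
  obtain ⟨r, hr⟩ := u.2
  obtain ⟨r', hr'⟩ := u'.2
  have hu : u ∈ ofDiam ι X (max r r') := ofDiam_mono (le_max_left r r') hr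
  have hu' : u' ∈ ofDiam ι X (max r r') := ofDiam_mono (le_max_right r r') hr'
  obtain ⟨S, hinj, hS⟩ := hbg.exists_injOn_eval (u'.vertex ·) (max r r')
  let i : ι := Classical.arbitrary ι
  exact Subtype.ext <| injOn_map_of_injOn (hinj i) (Filter.inter_mem hu (hS u.1 h))
    (Filter.inter_mem hu' (hS u'.1 fun _ => rfl)) (h i)

/-- The extension by continuity of a function on tuples to coarse simplices. -/
def extend (c : (ι → X) → ℤ) (u : CoarseSimplex ι X) : ℤ := ultraLim c u.1

section Principal

variable [Finite ι]

/-- The coarse simplex of an honest tuple of points of `X`. -/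
def principal (v : ι → X) : CoarseSimplex ι X :=
  ⟨pure v, by
    obtain ⟨r, hr⟩ := (finite_range fun p : ι × ι => dist (v p.1) (v p.2)).bddAbove
    exact ⟨r, fun i j => hr ⟨(i, j), rfl⟩⟩⟩

lemma tendsto_principal (u : CoarseSimplex ι X) : Filter.Tendsto principal u.1 (nhds u) :=
  tendsto_subtype_rng.2 u.1.tendsto_pure_self

lemma closure_image_principal (s : Set (ι → X)) :
    closure (principal '' s) = {u : CoarseSimplex ι X | s ∈ u.1} := by
  refine (closure_minimal ?_ ?_).antisymm fun u hu => ?_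
  · exact image_subset_iff.2 fun _ hv => hv
  · exact (ultrafilter_isClosed_basic s).preimage continuous_subtype_val
  · exact mem_closure_of_tendsto u.tendsto_principal
      (Filter.mem_of_superset hu fun _ hv => mem_image_of_mem principal hv)

lemma extend_comp_principal {f : CoarseSimplex ι X → ℤ} (hf : Continuous f) :
    extend (f ∘ principal) = f :=
  funext fun u => ((hf.tendsto u).comp u.tendsto_principal).limUnder_eq

lemma extend_principal (c : (ι → X) → ℤ) (v : ι → X) : extend c (principal v) = c v :=
  ultraLim_pure c v

end Principal

end CoarseSimplex

section Translation

variable {X : Type*} [MetricSpace X] {r s : ℝ} {a b c : Ultrafilter X}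

/-- `b` is the image of `a` under a map `X → X` moving every point by at most `r`. -/
def TranslatesTo (r : ℝ) (a b : Ultrafilter X) : Prop :=
  ∃ t : X → X, (∀ x, dist x (t x) ≤ r) ∧ a.map t = b

lemma TranslatesTo.refl (hr : 0 ≤ r) (a : Ultrafilter X) : TranslatesTo r a a :=
  ⟨id, fun x => (dist_self x).trans_le hr, a.map_id⟩

lemma TranslatesTo.mono (hrs : r ≤ s) (h : TranslatesTo r a b) : TranslatesTo s a b :=
  h.imp fun _ ht => ⟨fun x => (ht.1 x).trans hrs, ht.2⟩

lemma TranslatesTo.trans (hab : TranslatesTo r a b) (hbc : TranslatesTo s b c) :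
    TranslatesTo (r + s) a c := by
  obtain ⟨t, ht, rfl⟩ := hab
  obtain ⟨t', ht', rfl⟩ := hbc
  exact ⟨t' ∘ t, fun x => (dist_triangle x (t x) _).trans (add_le_add (ht x) (ht' (t x))),
    (a.map_map t t').symm⟩

lemma TranslatesTo.of_chain {n : ℕ} {b : Fin (n + 1) → Ultrafilter X}
    (h : ∀ j : Fin n, TranslatesTo r (b j.castSucc) (b j.succ)) (i : Fin (n + 1)) :
    TranslatesTo (i * r) (b 0) (b i) := by
  induction i using Fin.induction with
  | zero => exact .refl (by simp) _
  | succ j ih =>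
    refine (ih.trans (h j)).mono (le_of_eq ?_)
    simp only [Fin.val_castSucc, Fin.val_succ, Nat.cast_add, Nat.cast_one, add_one_mul]

lemma TranslatesTo.exists_coarseSimplex {ι : Type*} {b : ι → Ultrafilter X}
    (h : ∀ i, TranslatesTo r a (b i)) :
    ∃ u ∈ CoarseSimplex.ofDiam ι X (r + r), ∀ i, u.vertex i = b i := by
  choose t ht hb using h
  have hmem : boundedTuples ι X (r + r) ∈ a.map fun x i => t i x :=
    Ultrafilter.mem_map.2 <| Filter.univ_mem' fun x i j =>
      (dist_triangle_left (t i x) (t j x) x).trans (add_le_add (ht i x) (ht j x))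
  exact ⟨⟨a.map fun x i => t i x, _, hmem⟩, hmem, fun i => (a.map_map _ _).trans (hb i)⟩

-- On a colour class the `i`-th vertex of a tuple determines its `j`-th vertex.
lemma CoarseSimplex.translatesTo_vertex (hbg : BoundedGeometry X) {ι : Type*} [Finite ι]
    (hr : 0 ≤ r) {u : CoarseSimplex ι X} (hu : u ∈ ofDiam ι X r) (i j : ι) :
    TranslatesTo r (u.vertex i) (u.vertex j) := by
  obtain ⟨S, hinj, hS⟩ := hbg.exists_injOn_eval (u.vertex ·) r
  let D : Set (ι → X) := boundedTuples ι X r ∩ S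
  have hD : D ∈ u.1 := Filter.inter_mem hu (hS u.1 fun _ => rfl)
  let t (x : X) : X := if h : ∃ v ∈ D, v i = x then h.choose j else x
  have ht_dist (x : X) : dist x (t x) ≤ r := by
    by_cases h : ∃ v ∈ D, v i = x
    · obtain ⟨hv, hvx⟩ := h.choose_spec
      have hle : dist (h.choose i) (h.choose j) ≤ r := hv.1 i j
      simpa only [t, dif_pos h, hvx] using hle
    · simpa only [t, dif_neg h, dist_self] using hr
  have ht_eval {v : ι → X} (hv : v ∈ D) : t (v i) = v j := by
    have h : ∃ w ∈ D, w i = v i := ⟨v, hv, rfl⟩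
    have hchoose : h.choose = v := hinj i h.choose_spec.1 hv h.choose_spec.2
    simp only [t, dif_pos h, hchoose]
  refine ⟨t, ht_dist, Ultrafilter.coe_injective ?_⟩
  exact Filter.map_congr (Filter.mem_of_superset hD fun v hv => ht_eval hv)

end Translation

section UniformlyFiniteChains

lemma ufBdry_eq_sum {X : Type u} {n : ℕ} (c : (Fin (n + 2) → X) → ℤ) :
    ufBdry X n c = ∑ i : Fin (n + 2), (-1 : ℤ) ^ (i : ℕ) • pushf (· ∘ i.succAbove) c := by
  funext y
  simp only [ufBdry, Finset.sum_apply, Pi.smul_apply, smul_eq_mul]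
  rfl

variable {X : Type u} [MetricSpace X] {m n : ℕ}

lemma mem_ufChains_iff {c : (Fin (n + 1) → X) → ℤ} :
    c ∈ ufChains X n ↔
      (Set.range c).Finite ∧ ∃ r, support c ⊆ boundedTuples (Fin (n + 1)) X r :=
  and_congr_left' finite_range_iff_exists_abs_le.symm

lemma exists_coloring_injOn_support (hbg : BoundedGeometry X) {c : (Fin (n + 1) → X) → ℤ}
    (hc : c ∈ ufChains X n) (f : Fin (m + 1) → Fin (n + 1)) :
    ∃ N : ℕ, ∃ χ : X → Fin N, InjOn (fun v => (v ∘ f, χ ∘ v)) (support c) := by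
  obtain ⟨-, r, hr⟩ := mem_ufChains_iff.1 hc
  obtain ⟨N, χ, hχ⟩ := hbg.exists_coloring_injOn (Fin (n + 1)) r
  refine ⟨N, χ, fun v hv w hw hvw => hχ (f 0) (hr hv) (hr hw) ?_⟩
  obtain ⟨hf, hcolor⟩ := Prod.ext_iff.1 hvw
  exact Prod.ext (congrFun hf 0) hcolor

lemma pushf_comp_mem_ufChains (hbg : BoundedGeometry X) {c : (Fin (n + 1) → X) → ℤ}
    (hc : c ∈ ufChains X n) (f : Fin (m + 1) → Fin (n + 1)) :
    pushf (· ∘ f) c ∈ ufChains X m := by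
  obtain ⟨N, χ, hχ⟩ := exists_coloring_injOn_support hbg hc f
  obtain ⟨hfin, r, hr⟩ := mem_ufChains_iff.1 hc
  refine mem_ufChains_iff.2 ⟨finite_range_pushf hfin hχ, r, ?_⟩
  refine (support_pushf_subset _ c).trans (image_subset_iff.2 fun v hv => ?_)
  exact comp_mem_boundedTuples (hr hv) f

lemma ufBdry_mem_ufChains (hbg : BoundedGeometry X) {c : (Fin (n + 2) → X) → ℤ}
    (hc : c ∈ ufChains X (n + 1)) : ufBdry X n c ∈ ufChains X n := by
  rw [ufBdry_eq_sum]
  exact sum_mem fun i _ => zsmul_mem (pushf_comp_mem_ufChains hbg hc i.succAbove) _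

namespace CoarseSimplex

lemma comp_principal_mem_ufChains {f : CoarseSimplex (Fin (n + 1)) X → ℤ}
    (hf : f ∈ ccZ (CoarseSimplex (Fin (n + 1)) X)) : f ∘ principal ∈ ufChains X n := by
  obtain ⟨r, hr⟩ := exists_subset_ofDiam hf.2.isCompact
  have hfin : (Set.range f).Finite := (hf.2.isCompact_range hf.1).finite_of_discrete
  exact mem_ufChains_iff.2
    ⟨hfin.subset (range_comp_subset_range _ _), r, fun v hv => hr (subset_tsupport f hv)⟩

lemma extend_mem_ccZ {c : (Fin (n + 1) → X) → ℤ} (hc : c ∈ ufChains X n) :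
    extend c ∈ ccZ (CoarseSimplex (Fin (n + 1)) X) := by
  obtain ⟨hfin, r, hr⟩ := mem_ufChains_iff.1 hc
  constructor
  · refine ((IsLocallyConstant.iff_eventually_eq _).2 fun u => ?_).continuous
    filter_upwards [(isOpen_mem {v | c v = extend c u}).mem_nhds
      (eventually_eq_ultraLim hfin u.1)] with u' hu'
    exact ultraLim_eq hu'
  · refine HasCompactSupport.intro (isCompact_ofDiam r) fun u hu => by_contra fun hne => hu ?_
    exact Filter.mem_of_superset ((ultraLim_ne_zero_iff hfin).1 hne) hr

lemma extend_pushf_comp (hbg : BoundedGeometry X) {c : (Fin (n + 1) → X) → ℤ}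
    (hc : c ∈ ufChains X n) (f : Fin (m + 1) → Fin (n + 1)) :
    extend (pushf (· ∘ f) c) = pushf (restrict f) (extend c) := by
  obtain ⟨N, χ, hχ⟩ := exists_coloring_injOn_support hbg hc f
  obtain ⟨hfin, r, hr⟩ := mem_ufChains_iff.1 hc
  have hsupp : support (ultraLim c) ⊆
      Set.range (Subtype.val : CoarseSimplex (Fin (n + 1)) X → _) := fun u hu =>
    ⟨⟨u, r, Filter.mem_of_superset ((ultraLim_ne_zero_iff hfin).1 hu) hr⟩, rfl⟩
  funext w
  calc ultraLim (pushf (· ∘ f) c) w.1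
      = pushf (Ultrafilter.map (· ∘ f)) (ultraLim c) w.1 := by rw [pushf_map_ultraLim hfin hχ]
    _ = pushf (restrict f) (extend c) w :=
        pushf_apply_of_injective (φ := restrict f) (ψ := Ultrafilter.map (· ∘ f))
          Subtype.val_injective Subtype.val_injective (fun _ => rfl) hsupp w

/-- The boundary of a function on coarse `(n + 1)`-simplices: the alternating sum of its
pushforwards along the face maps. -/
def boundary (n : ℕ) (f : CoarseSimplex (Fin (n + 2)) X → ℤ) :
    CoarseSimplex (Fin (n + 1)) X → ℤ :=
  ∑ i : Fin (n + 2), (-1 : ℤ) ^ (i : ℕ) • pushf (restrict i.succAbove) f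

lemma boundary_zero_apply (f : CoarseSimplex (Fin 2) X → ℤ) (w : CoarseSimplex (Fin 1) X) :
    boundary 0 f w =
      pushf (restrict (Fin.succAbove 0)) f w - pushf (restrict (Fin.succAbove 1)) f w := by
  rw [boundary, Fin.sum_univ_two]
  simp only [Fin.val_zero, Fin.val_one, pow_zero, pow_one, one_smul, neg_smul, ← sub_eq_add_neg,
    Pi.sub_apply]

lemma extend_ufBdry (hbg : BoundedGeometry X) {c : (Fin (n + 2) → X) → ℤ}
    (hc : c ∈ ufChains X (n + 1)) : extend (ufBdry X n c) = boundary n (extend c) := by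
  have hfin (i : Fin (n + 2)) : (Set.range (pushf (· ∘ i.succAbove) c)).Finite :=
    (mem_ufChains_iff.1 (pushf_comp_mem_ufChains hbg hc i.succAbove)).1
  funext w
  rw [extend, ufBdry_eq_sum, ultraLim_sum _ fun i _ => finite_range_zsmul (hfin i) _]
  simp only [boundary, Finset.sum_apply]
  refine Finset.sum_congr rfl fun i _ => ?_
  rw [ultraLim_zsmul (hfin i), Pi.smul_apply, Pi.smul_apply, ← extend_pushf_comp hbg hc, extend]

end CoarseSimplex

end UniformlyFiniteChains

/-- An additive homomorphism that is injective on a subgroup `C` induces an isomorphism from the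
subquotient `Z ⧸ W` of `C` onto the subquotient of the images. -/
def subquotientEquivOfInjOn {A B : Type*} [AddCommGroup A] [AddCommGroup B] {Φ : A →+ B}
    {C Z W : AddSubgroup A} {Z' W' : AddSubgroup B} (hΦ : InjOn Φ C) (hZ : Z ≤ C) (hW : W ≤ C)
    (hZ' : Z.map Φ = Z') (hW' : W.map Φ = W') :
    Z ⧸ W.comap Z.subtype ≃+ Z' ⧸ W'.comap Z'.subtype :=
  have hbij : Bijective (Φ.addSubgroupMap Z) :=
    ⟨fun x y hxy => Subtype.ext (hΦ (hZ x.2) (hZ y.2) (Subtype.ext_iff.1 hxy)),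
      Φ.addSubgroupMap_surjective Z⟩
  QuotientAddGroup.congr _ _
    ((AddEquiv.ofBijective _ hbij).trans (AddEquiv.addSubgroupCongr hZ')) <| by
      subst hZ' hW'
      ext ⟨_, z, hz, rfl⟩
      constructor
      · rintro ⟨a, ha, haz⟩
        exact ⟨a, ha, Subtype.ext_iff.1 haz⟩
      · rintro ⟨a, ha, haz⟩
        obtain rfl : a = z := hΦ (hW ha) (hZ hz) haz
        exact ⟨⟨a, hz⟩, ha, rfl⟩

section Topology

lemma GroupoidData.mCycles_le_ccZSub {G : Type*} [TopologicalSpace G] (D : GroupoidData G) :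
    ∀ n, D.mCycles n ≤ ccZSub (D.MSp n)
  | 0 => le_rfl
  | _ + 1 => (AddSubgroup.closure_le _).2 fun _ ha => ha.1

lemma isHomeomorph_of_image_isCompact_mem_nhds {Y Z : Type*} [TopologicalSpace Y]
    [TopologicalSpace Z] [T2Space Z] {f : Y → Z} (hf : Continuous f) (hinj : Injective f)
    (h : ∀ z, ∃ K, IsCompact K ∧ f '' K ∈ nhds z) : IsHomeomorph f := by
  refine ⟨hf, fun W hW => isOpen_iff_mem_nhds.2 ?_, hinj, fun z => ?_⟩
  · rintro _ ⟨y, hy, rfl⟩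
    obtain ⟨K, hK, hKy⟩ := h (f y)
    have hclosed : IsClosed (f '' (K \ W)) := ((hK.diff hW).image hf).isClosed
    have hnotMem : f y ∉ f '' (K \ W) := by
      rw [hinj.mem_set_image]
      exact fun hy' => hy'.2 hy
    filter_upwards [hKy, hclosed.isOpen_compl.mem_nhds hnotMem]
    rintro _ ⟨y', hy', rfl⟩ hcompl
    exact ⟨y', by_contra fun hW' => hcompl ⟨y', ⟨hy', hW'⟩, rfl⟩, rfl⟩
  · obtain ⟨K, -, hK⟩ := h z
    obtain ⟨y, -, hy⟩ := mem_of_mem_nhds hK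
    exact ⟨y, hy⟩

lemma comp_mem_ccZ_iff {Y Z : Type*} [TopologicalSpace Y] [TopologicalSpace Z] {h : Y → Z}
    (hh : IsHomeomorph h) {f : Z → ℤ} : f ∘ h ∈ ccZ Y ↔ f ∈ ccZ Z := by
  obtain ⟨e, rfl⟩ := isHomeomorph_iff_exists_homeomorph.1 hh
  refine ⟨fun hf => ?_, fun hf => ⟨hf.1.comp e.continuous, hf.2.comp_homeomorph e⟩⟩
  have hcomp : f = (f ∘ e) ∘ e.symm := by rw [comp_assoc, e.self_comp_symm, comp_id]
  rw [hcomp]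
  exact ⟨hf.1.comp e.symm.continuous, hf.2.comp_homeomorph e.symm⟩

/-- The identification of the two models, ultrafilters and Mathlib's `StoneCech`, of the
Stone–Čech compactification of a discrete space. -/
def ultrafilterHomeomorphStoneCech (X : Type*) [TopologicalSpace X] [DiscreteTopology X] :
    Ultrafilter X ≃ₜ StoneCech X :=
  have hpure : Continuous (pure : X → Ultrafilter X) := continuous_of_discreteTopology
  have hextend : Continuous (Ultrafilter.extend (stoneCechUnit : X → StoneCech X)) :=
    continuous_ultrafilter_extend _
  { toFun := Ultrafilter.extend stoneCechUnit
    invFun := stoneCechExtend hpure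
    left_inv := congrFun <| denseRange_pure.equalizer
      ((continuous_stoneCechExtend hpure).comp hextend) continuous_id <| funext fun x => by
        simp only [comp_apply, ultrafilter_extend_pure, stoneCechExtend_stoneCechUnit]
    right_inv := congrFun <| denseRange_stoneCechUnit.equalizer
      (hextend.comp (continuous_stoneCechExtend hpure)) continuous_id <| funext fun x => by
        simp only [comp_apply, ultrafilter_extend_pure, stoneCechExtend_stoneCechUnit]
    continuous_toFun := hextend
    continuous_invFun := continuous_stoneCechExtend hpure }

lemma ultrafilterHomeomorphStoneCech_pure {X : Type*} [TopologicalSpace X] [DiscreteTopology X]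
    (x : X) : ultrafilterHomeomorphStoneCech X (pure x) = stoneCechUnit x :=
  ultrafilter_extend_pure _ x

end Topology

section CoarseGroupoidNerve

variable {X : Type u} [MetricSpace X]

local instance : TopologicalSpace (CoarseGpd X) := coarseTop X

lemma continuous_coarseGpd_val : Continuous fun g : CoarseGpd X => g.1 :=
  continuous_iSup_dom.2 fun _ => continuous_coinduced_dom.2 continuous_subtype_val

local instance : T2Space (CoarseGpd X) :=
  .of_injective_continuous Subtype.val_injective continuous_coarseGpd_val

/-- The inclusion of the entourage `E_r` into the coarse groupoid. -/
def ofEnt {r : ℝ} (hr : 0 < r) (q : Ent X r) : CoarseGpd X := ⟨q.1, r, hr, q.2⟩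

lemma continuous_ofEnt {r : ℝ} (hr : 0 < r) : Continuous (ofEnt hr : Ent X r → CoarseGpd X) :=
  continuous_iSup_rng (i := (⟨r, hr⟩ : {r : ℝ // 0 < r})) continuous_coinduced_rng

namespace CoarseSimplex

variable [DiscreteTopology X]

/-- The point of `βX × βX` given by the two vertices of a coarse edge. -/
def vertexPair (u : CoarseSimplex (Fin 2) X) : StoneCech X × StoneCech X :=
  (ultrafilterHomeomorphStoneCech X (u.vertex 0), ultrafilterHomeomorphStoneCech X (u.vertex 1))

lemma continuous_vertexPair : Continuous (vertexPair : CoarseSimplex (Fin 2) X → _) := by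
  have hvertex (i : Fin 2) :
      Continuous fun u : CoarseSimplex (Fin 2) X => ultrafilterHomeomorphStoneCech X (u.vertex i) :=
    (ultrafilterHomeomorphStoneCech X).continuous.comp
      ((continuous_ultrafilter_map _).comp continuous_subtype_val)
  exact (hvertex 0).prodMk (hvertex 1)

lemma vertexPair_principal (v : Fin 2 → X) :
    vertexPair (principal v) = (stoneCechUnit (v 0), stoneCechUnit (v 1)) :=
  Prod.ext (ultrafilterHomeomorphStoneCech_pure _) (ultrafilterHomeomorphStoneCech_pure _)

lemma image_vertexPair_ofDiam {r : ℝ} (hr : 0 ≤ r) :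
    vertexPair '' ofDiam (Fin 2) X r = Ent X r := by
  have hclosure : closure (principal '' boundedTuples (Fin 2) X r) = ofDiam (Fin 2) X r :=
    closure_image_principal _
  rw [← hclosure, image_closure_of_isCompact (hclosure ▸ isCompact_ofDiam r)
    continuous_vertexPair.continuousOn, Ent, image_image]
  congr 1
  ext p
  constructor
  · rintro ⟨v, hv, rfl⟩
    exact ⟨v 0, v 1, hv 0 1, vertexPair_principal v⟩
  · rintro ⟨x, y, hxy, rfl⟩
    refine ⟨![x, y], fun i j => ?_, vertexPair_principal _⟩
    fin_cases i <;> fin_cases j <;> simp [hr, hxy, dist_comm y x]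

/-- The arrow of the coarse groupoid given by a coarse edge. -/
def edge (u : CoarseSimplex (Fin 2) X) : CoarseGpd X :=
  ⟨vertexPair u, by
    obtain ⟨r, hr⟩ := u.2
    refine ⟨max r 1, lt_max_of_lt_right one_pos, ?_⟩
    rw [← image_vertexPair_ofDiam (le_max_of_le_right zero_le_one)]
    exact mem_image_of_mem _ (ofDiam_mono (le_max_left r 1) hr)⟩

lemma continuous_edge : Continuous (edge : CoarseSimplex (Fin 2) X → CoarseGpd X) := by
  refine continuous_iff_continuousAt.2 fun u => ?_
  obtain ⟨r, hr⟩ := u.2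
  have hpos : 0 < max r 1 := lt_max_of_lt_right one_pos
  have hmaps (w : ofDiam (Fin 2) X (max r 1)) : vertexPair w.1 ∈ Ent X (max r 1) := by
    rw [← image_vertexPair_ofDiam hpos.le]
    exact mem_image_of_mem _ w.2
  have hcont : ContinuousOn (edge : CoarseSimplex (Fin 2) X → _) (ofDiam (Fin 2) X (max r 1)) :=
    continuousOn_iff_continuous_domRestrict.2 <| (continuous_ofEnt hpos).comp
      ((continuous_vertexPair.comp continuous_subtype_val).subtype_mk hmaps)
  exact hcont.continuousAt ((isOpen_mem _).mem_nhds (ofDiam_mono (le_max_left r 1) hr))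

lemma surjective_edge : Surjective (edge : CoarseSimplex (Fin 2) X → CoarseGpd X) := by
  rintro ⟨p, r, hr, hp⟩
  rw [← image_vertexPair_ofDiam hr.le] at hp
  obtain ⟨u, -, rfl⟩ := hp
  exact ⟨u, rfl⟩

lemma edge_eq_edge_iff {u w : CoarseSimplex (Fin 2) X} :
    u.edge = w.edge ↔ u.vertex 0 = w.vertex 0 ∧ u.vertex 1 = w.vertex 1 := by
  refine Subtype.ext_iff.trans ?_
  simp only [edge, vertexPair, Prod.mk.injEq, EmbeddingLike.apply_eq_iff_eq]

lemma injective_edge (hbg : BoundedGeometry X) :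
    Injective (edge : CoarseSimplex (Fin 2) X → CoarseGpd X) := fun _ _ h =>
  eq_of_forall_vertex_eq hbg (Fin.forall_fin_two.2 (edge_eq_edge_iff.1 h))

lemma isOpenMap_edge (hbg : BoundedGeometry X) :
    IsOpenMap (edge : CoarseSimplex (Fin 2) X → CoarseGpd X) := by
  refine fun W hW => isOpen_iSup_iff.2 fun ⟨r, hr⟩ => isOpen_coinduced.2 ?_
  have hclosed : IsClosed (vertexPair '' (ofDiam (Fin 2) X r \ W)) :=
    (((isCompact_ofDiam r).diff hW).image continuous_vertexPair).isClosed
  convert hclosed.isOpen_compl.preimage continuous_subtype_val using 1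
  ext ⟨p, hp⟩
  rw [← image_vertexPair_ofDiam hr.le] at hp
  obtain ⟨u, hu, rfl⟩ := hp
  have hinj : Injective (vertexPair : CoarseSimplex (Fin 2) X → _) := fun _ _ h =>
    injective_edge hbg (Subtype.ext h)
  change edge u ∈ edge '' W ↔ vertexPair u ∉ vertexPair '' (ofDiam (Fin 2) X r \ W)
  rw [(injective_edge hbg).mem_set_image, hinj.mem_set_image]
  exact ⟨fun huW h => h.2 huW, fun h => by_contra fun huW => h ⟨hu, huW⟩⟩

/-- The arrow of the coarse groupoid joining the `i`-th and the `j`-th vertex. -/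
def arrow {ι : Type*} (i j : ι) (u : CoarseSimplex ι X) : CoarseGpd X := (u.restrict ![i, j]).edge

lemma continuous_arrow {ι : Type*} (i j : ι) :
    Continuous (arrow i j : CoarseSimplex ι X → CoarseGpd X) :=
  continuous_edge.comp (continuous_restrict _)

lemma mul_arrow {ι : Type*} (i j k : ι) (u : CoarseSimplex ι X) :
    (coarseData X).mul (u.arrow i j) (u.arrow j k) = u.arrow i k :=
  dif_pos (u.arrow i k).2

lemma vertex_one_eq_vertex_zero {u w : CoarseSimplex (Fin 2) X}
    (h : (coarseData X).source u.edge = (coarseData X).range w.edge) : u.vertex 1 = w.vertex 0 :=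
  (ultrafilterHomeomorphStoneCech X).injective (congrArg (fun g : CoarseGpd X => g.1.1) h)

/-- The parametrization of the nerve of the coarse groupoid by coarse simplices: an
`n`-simplex is sent to the composable string of its `n` consecutive edges. -/
def nerveMap : (n : ℕ) → CoarseSimplex (Fin (n + 1)) X → (coarseData X).MSp n
  | 0 => fun u => ⟨u.arrow 0 0, rfl⟩
  | _ + 1 => fun u => ⟨fun j => u.arrow j.castSucc j.succ, fun _ _ => rfl⟩

lemma continuous_nerveMap : ∀ n, Continuous (nerveMap n : CoarseSimplex (Fin (n + 1)) X → _)
  | 0 => (continuous_arrow 0 0).subtype_mk _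
  | _ + 1 => (continuous_pi fun _ => continuous_arrow _ _).subtype_mk _

lemma injective_nerveMap (hbg : BoundedGeometry X) :
    ∀ n, Injective (nerveMap n : CoarseSimplex (Fin (n + 1)) X → _)
  | 0 => fun u w h => eq_of_forall_vertex_eq hbg <| Fin.forall_fin_one.2
      (edge_eq_edge_iff.1 (Subtype.ext_iff.1 h)).1
  | n + 1 => fun u w h => by
    have hedge (j : Fin (n + 1)) :
        u.vertex j.castSucc = w.vertex j.castSucc ∧ u.vertex j.succ = w.vertex j.succ :=
      edge_eq_edge_iff.1 (congrFun (Subtype.ext_iff.1 h) j)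
    exact eq_of_forall_vertex_eq hbg
      (Fin.forall_fin_succ.2 ⟨(hedge 0).1, fun j => (hedge j).2⟩)

lemma image_nerveMap_zero_ofDiam :
    nerveMap 0 '' ofDiam (Fin 1) X 0 = (univ : Set ((coarseData X).MSp 0)) := by
  refine eq_univ_of_forall ?_
  rintro ⟨g, hg⟩
  obtain ⟨w, rfl⟩ := surjective_edge g
  have hw : w.vertex 0 = w.vertex 1 := (ultrafilterHomeomorphStoneCech X).injective hg
  have hconst (_ : Fin 1) : TranslatesTo 0 (w.vertex 0) (w.vertex 0) := .refl le_rfl _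
  obtain ⟨u, hu, hvertex⟩ := TranslatesTo.exists_coarseSimplex hconst
  rw [add_zero] at hu
  exact ⟨u, hu, Subtype.ext (edge_eq_edge_iff.2 ⟨hvertex 0, (hvertex 0).trans hw⟩)⟩

lemma exists_nerveMap_succ_eq (hbg : BoundedGeometry X) {n : ℕ} {r : ℝ} (hr : 0 ≤ r)
    {v : (coarseData X).Comps (n + 1)} (hv : ∀ j, v.1 j ∈ edge '' ofDiam (Fin 2) X r) :
    ∃ u ∈ ofDiam (Fin (n + 2)) X ((n + 1) * r + (n + 1) * r), nerveMap (n + 1) u = v := by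
  choose w hw hwv using hv
  let b : Fin (n + 2) → Ultrafilter X := Fin.cons ((w 0).vertex 0) fun j => (w j).vertex 1
  have hb_castSucc (j : Fin (n + 1)) : b j.castSucc = (w j).vertex 0 := by
    induction j using Fin.cases with
    | zero => rfl
    | succ j =>
      refine vertex_one_eq_vertex_zero ?_
      rw [hwv, hwv]
      exact v.2 j.castSucc (by simp)
  have hstep (j : Fin (n + 1)) : TranslatesTo r (b j.castSucc) (b j.succ) :=
    hb_castSucc j ▸ translatesTo_vertex hbg hr (hw j) 0 1
  have hfrom_zero (i : Fin (n + 2)) : TranslatesTo ((n + 1) * r) (b 0) (b i) :=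
    (TranslatesTo.of_chain hstep i).mono <|
      mul_le_mul_of_nonneg_right (by exact_mod_cast Nat.le_of_lt_succ i.2) hr
  obtain ⟨u, hu, hvertex⟩ := TranslatesTo.exists_coarseSimplex hfrom_zero
  refine ⟨u, hu, Subtype.ext <| funext fun j => ?_⟩
  rw [← hwv j]
  exact edge_eq_edge_iff.2 ⟨(hvertex _).trans (hb_castSucc j), hvertex _⟩

lemma exists_image_nerveMap_ofDiam_mem_nhds (hbg : BoundedGeometry X) :
    ∀ (n : ℕ) (z : (coarseData X).MSp n),
      ∃ r, nerveMap n '' ofDiam (Fin (n + 1)) X r ∈ nhds z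
  | 0, _ => ⟨0, image_nerveMap_zero_ofDiam (X := X) ▸ Filter.univ_mem⟩
  | n + 1, v => by
    choose w hw using fun j => surjective_edge (v.1 j)
    obtain ⟨r, hr⟩ := exists_subset_ofDiam (finite_range w).isCompact
    have hw_mem (j : Fin (n + 1)) : w j ∈ ofDiam (Fin 2) X (max r 0) :=
      ofDiam_mono (le_max_left r 0) (hr (mem_range_self j))
    have hopen (j : Fin (n + 1)) : IsOpen
        {v' : (coarseData X).Comps (n + 1) | v'.1 j ∈ edge '' ofDiam (Fin 2) X (max r 0)} :=
      (isOpenMap_edge hbg _ (isOpen_mem _)).preimage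
        ((continuous_apply j).comp continuous_subtype_val)
    refine ⟨(n + 1) * max r 0 + (n + 1) * max r 0, ?_⟩
    filter_upwards [Filter.eventually_all.2 fun j =>
      (hopen j).mem_nhds ⟨w j, hw_mem j, hw j⟩] with v' hv'
    exact exists_nerveMap_succ_eq hbg (le_max_right r 0) hv'

lemma isHomeomorph_nerveMap (hbg : BoundedGeometry X) (n : ℕ) :
    IsHomeomorph (nerveMap n : CoarseSimplex (Fin (n + 1)) X → (coarseData X).MSp n) := by
  have : T2Space ((coarseData X).MSp n) := by
    cases n <;> exact inferInstanceAs (T2Space (Subtype _))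
  refine isHomeomorph_of_image_isCompact_mem_nhds (continuous_nerveMap n)
    (injective_nerveMap hbg n) fun z => ?_
  obtain ⟨r, hr⟩ := exists_image_nerveMap_ofDiam_mem_nhds hbg n z
  exact ⟨_, isCompact_ofDiam r, hr⟩

lemma dface_nerveMap {n : ℕ} (i : Fin (n + 3)) (u : CoarseSimplex (Fin (n + 3)) X) :
    (coarseData X).dface (n + 1) i (nerveMap (n + 2) u).1 =
      (nerveMap (n + 1) (u.restrict i.succAbove)).1 := by
  funext j
  change _ = u.arrow (i.succAbove j.castSucc) (i.succAbove j.succ)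
  rw [GroupoidData.dface]
  split_ifs with hlt heq
  · rw [Fin.succAbove_of_castSucc_lt _ _ (by simp [Fin.lt_def]; omega),
      Fin.succAbove_of_castSucc_lt _ _ (by simpa [Fin.lt_def] using hlt)]
    rfl
  · rw [Fin.succAbove_of_castSucc_lt _ _ (by simp [Fin.lt_def]; omega),
      Fin.succAbove_of_le_castSucc _ _ (by simp [Fin.le_def]; omega)]
    exact mul_arrow _ _ _ u
  · rw [Fin.succAbove_of_le_castSucc _ _ (by simp [Fin.le_def]; omega),
      Fin.succAbove_of_le_castSucc _ _ (by simp [Fin.le_def]; omega)]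
    rfl

lemma pushf_apply_nerveMap (hbg : BoundedGeometry X) {Y : Type*} {m n : ℕ}
    (a : (coarseData X).MSp m → ℤ) {ψ : (coarseData X).MSp m → Y} {f : Fin (n + 1) → Fin (m + 1)}
    {j : (coarseData X).MSp n → Y} (hj : Injective j)
    (hcomm : ∀ u, ψ (nerveMap m u) = j (nerveMap n (u.restrict f)))
    (w : CoarseSimplex (Fin (n + 1)) X) :
    pushf ψ a (j (nerveMap n w)) = pushf (restrict f) (a ∘ nerveMap m) w :=
  pushf_apply_of_injective (injective_nerveMap hbg m) (hj.comp (injective_nerveMap hbg n)) hcomm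
    (fun x _ => (isHomeomorph_nerveMap hbg m).surjective x) w

lemma mBdry_comp_nerveMap (hbg : BoundedGeometry X) :
    ∀ (n : ℕ) (a : (coarseData X).MSp (n + 1) → ℤ),
      (coarseData X).mBdry n a ∘ nerveMap n = boundary n (a ∘ nerveMap (n + 1))
  | 0, a => by
    funext w
    have hsource := pushf_apply_nerveMap hbg (n := 0) a (f := Fin.succAbove 0)
      (ψ := fun x : (coarseData X).Comps 1 => (coarseData X).source (x.1 0))
      Subtype.val_injective (fun _ => rfl) w
    have hrange := pushf_apply_nerveMap hbg (n := 0) a (f := Fin.succAbove 1)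
      (ψ := fun x : (coarseData X).Comps 1 => (coarseData X).range (x.1 0))
      Subtype.val_injective (fun _ => rfl) w
    exact (congrArg₂ (· - ·) hsource hrange).trans (boundary_zero_apply _ w).symm
  | n + 1, a => by
    funext w
    have hface (i : Fin (n + 3)) := pushf_apply_nerveMap hbg (n := n + 1) a (f := i.succAbove)
      (ψ := fun x : (coarseData X).Comps (n + 2) => (coarseData X).dface (n + 1) i x.1)
      Subtype.val_injective (dface_nerveMap i) w
    simp only [boundary, Finset.sum_apply, Pi.smul_apply, smul_eq_mul, ← hface]
    rfl

end CoarseSimplex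

open CoarseSimplex hiding extend

variable [DiscreteTopology X] {n : ℕ}

/-- Restriction of functions on the nerve of the coarse groupoid to the simplices of `X`; on
compactly supported continuous functions this is the isomorphism with the uniformly finite
chain complex. -/
def restrictToTuples (X : Type u) [MetricSpace X] [DiscreteTopology X] (n : ℕ) :
    ((coarseData X).MSp n → ℤ) →+ ((Fin (n + 1) → X) → ℤ) where
  toFun f := f ∘ nerveMap n ∘ principal
  map_zero' := rfl
  map_add' _ _ := rfl

lemma extend_restrictToTuples {f : (coarseData X).MSp n → ℤ} (hf : Continuous f) :
    CoarseSimplex.extend (restrictToTuples X n f) = f ∘ nerveMap n :=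
  extend_comp_principal (hf.comp (continuous_nerveMap n))

variable (hbg : BoundedGeometry X)

include hbg

lemma restrictToTuples_mem_ufChains {f : (coarseData X).MSp n → ℤ}
    (hf : f ∈ ccZ ((coarseData X).MSp n)) : restrictToTuples X n f ∈ ufChains X n :=
  comp_principal_mem_ufChains ((comp_mem_ccZ_iff (isHomeomorph_nerveMap hbg n)).2 hf)

lemma injOn_restrictToTuples :
    InjOn (restrictToTuples X n) (ccZSub ((coarseData X).MSp n)) := fun f hf g hg h =>
  (isHomeomorph_nerveMap hbg n).surjective.injective_comp_right <| by
    simp only [← extend_restrictToTuples hf.1, ← extend_restrictToTuples hg.1, h]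

lemma exists_restrictToTuples_eq {c : (Fin (n + 1) → X) → ℤ} (hc : c ∈ ufChains X n) :
    ∃ f ∈ ccZ ((coarseData X).MSp n), restrictToTuples X n f = c := by
  obtain ⟨e, he⟩ := isHomeomorph_iff_exists_homeomorph.1 (isHomeomorph_nerveMap hbg n)
  have hcomp : (CoarseSimplex.extend c ∘ e.symm) ∘ nerveMap n = CoarseSimplex.extend c := by
    rw [← he, comp_assoc, e.symm_comp_self, comp_id]
  refine ⟨CoarseSimplex.extend c ∘ e.symm, ?_, funext fun v => ?_⟩
  · rw [← comp_mem_ccZ_iff (isHomeomorph_nerveMap hbg n), hcomp]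
    exact extend_mem_ccZ hc
  · exact (congrFun hcomp (principal v)).trans (extend_principal c v)

lemma mBdry_comp_nerveMap_eq_extend {a : (coarseData X).MSp (n + 1) → ℤ}
    (ha : a ∈ ccZ ((coarseData X).MSp (n + 1))) :
    (coarseData X).mBdry n a ∘ nerveMap n =
      CoarseSimplex.extend (ufBdry X n (restrictToTuples X (n + 1) a)) := by
  rw [mBdry_comp_nerveMap hbg, extend_ufBdry hbg (restrictToTuples_mem_ufChains hbg ha),
    extend_restrictToTuples ha.1]

lemma mBdry_mem_ccZ {a : (coarseData X).MSp (n + 1) → ℤ}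
    (ha : a ∈ ccZ ((coarseData X).MSp (n + 1))) :
    (coarseData X).mBdry n a ∈ ccZ ((coarseData X).MSp n) := by
  rw [← comp_mem_ccZ_iff (isHomeomorph_nerveMap hbg n), mBdry_comp_nerveMap_eq_extend hbg ha]
  exact extend_mem_ccZ (ufBdry_mem_ufChains hbg (restrictToTuples_mem_ufChains hbg ha))

lemma restrictToTuples_mBdry {a : (coarseData X).MSp (n + 1) → ℤ}
    (ha : a ∈ ccZ ((coarseData X).MSp (n + 1))) :
    restrictToTuples X n ((coarseData X).mBdry n a) =
      ufBdry X n (restrictToTuples X (n + 1) a) :=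
  funext fun v => (congrFun (mBdry_comp_nerveMap_eq_extend hbg ha) (principal v)).trans
    (extend_principal _ v)

lemma mBdries_le_ccZSub : (coarseData X).mBdries n ≤ ccZSub ((coarseData X).MSp n) := by
  refine (AddSubgroup.closure_le _).2 ?_
  rintro _ ⟨a, ha, rfl⟩
  exact mBdry_mem_ccZ hbg ha

lemma map_restrictToTuples_mCycles :
    ∀ n, ((coarseData X).mCycles n).map (restrictToTuples X n) = ufCycles X n
  | 0 => by
    ext c
    refine ⟨?_, fun hc => exists_restrictToTuples_eq hbg hc⟩
    rintro ⟨f, hf, rfl⟩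
    exact restrictToTuples_mem_ufChains hbg hf
  | n + 1 => by
    rw [GroupoidData.mCycles, ufCycles, AddMonoidHom.map_closure]
    congr 1
    ext c
    constructor
    · rintro ⟨f, ⟨hf, hbdry⟩, rfl⟩
      refine ⟨restrictToTuples_mem_ufChains hbg hf, ?_⟩
      rw [← restrictToTuples_mBdry hbg hf, hbdry, map_zero]
    · rintro ⟨hc, hbdry⟩
      obtain ⟨f, hf, rfl⟩ := exists_restrictToTuples_eq hbg hc
      refine ⟨f, ⟨hf, injOn_restrictToTuples hbg (mBdry_mem_ccZ hbg hf) (zero_mem _) ?_⟩, rfl⟩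
      rw [restrictToTuples_mBdry hbg hf, hbdry, map_zero]

lemma map_restrictToTuples_mBdries :
    ((coarseData X).mBdries n).map (restrictToTuples X n) = ufBdries X n := by
  rw [GroupoidData.mBdries, ufBdries, AddMonoidHom.map_closure]
  congr 1
  ext c
  constructor
  · rintro ⟨_, ⟨a, ha, rfl⟩, rfl⟩
    exact ⟨_, restrictToTuples_mem_ufChains hbg ha, (restrictToTuples_mBdry hbg ha).symm⟩
  · rintro ⟨b, hb, rfl⟩
    obtain ⟨a, ha, rfl⟩ := exists_restrictToTuples_eq hbg hb
    exact ⟨_, ⟨a, ha, rfl⟩, restrictToTuples_mBdry hbg ha⟩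

end CoarseGroupoidNerve

/-- **Theorem G.**  Let `X` be a bounded geometry metric space and `G(X)` the associated
coarse groupoid.  Then there is a canonical isomorphism `H_*(G(X)) ≅ H_*^{uf}(X)` between
the groupoid homology of `G(X)` and the uniformly finite homology of `X`. -/
theorem coarse_groupoid_homology_iso_uf
    (X : Type u) [MetricSpace X] (hbg : BoundedGeometry X) :
    letI : TopologicalSpace (CoarseGpd X) := coarseTop X
    ∀ n : ℕ, Nonempty ((coarseData X).Homology n ≃+ ufHomology X n) := by
  intro n
  have := hbg.discreteTopology
  let _ : TopologicalSpace (CoarseGpd X) := coarseTop X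
  exact ⟨subquotientEquivOfInjOn (injOn_restrictToTuples hbg) ((coarseData X).mCycles_le_ccZSub n)
    (mBdries_le_ccZSub hbg) (map_restrictToTuples_mCycles hbg n)
    (map_restrictToTuples_mBdries hbg)⟩
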